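/- For any reflexive linear order ▷ on X, the plurality-with-tie-breaking SRS R^{P,▷} satisfies WIVIP, TO, IWS, and SI; moreover, if |X| ≥ 2, R^{P,▷} does not satisfy NT. -/

import Mathlib

/-!
Social ranking solutions (SRSs).  The set of individuals is a finite type `X`;
coalitions are elements of `Finset X` (so the domain of a power relation is the
whole power set `𝔛 = 2^X`).  A weak order `≿ ∈ ℛ(𝔛)` is encoded as a relation
`r : Finset X → Finset X → Prop` together with (when needed) its list of
equivalence classes `L = [Σ₁, …, Σ_l]` in strictly decreasing order
(`IsClassList r L`).
-/

namespace SocialRanking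

variable {X : Type*} [Fintype X] [DecidableEq X]

/-- A weak order: a reflexive, complete and transitive binary relation. -/
def IsWeakOrder {A : Type*} (r : A → A → Prop) : Prop :=
  Reflexive r ∧ (∀ a b, r a b ∨ r b a) ∧ Transitive r

/-- A social ranking solution maps every weak order on `2^X` to a weak order on `X`. -/
def IsSRS (R : (Finset X → Finset X → Prop) → X → X → Prop) : Prop :=
  ∀ r, IsWeakOrder r → IsWeakOrder (R r)

/-- `IsClassList r L` : `L = [Σ₁, …, Σ_l]` is the list of the equivalence classes of
the weak order `r` on `2^X`, in strictly decreasing order (`≿ : Σ₁ ≻ ⋯ ≻ Σ_l`):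
every class is nonempty, every coalition lies in exactly one class, and
`S ≿ T ↔ i ≤ j` whenever `S ∈ Σᵢ` and `T ∈ Σⱼ` (0-based indices). -/
def IsClassList (r : Finset X → Finset X → Prop) (L : List (Finset (Finset X))) : Prop :=
  (∀ C ∈ L, C.Nonempty) ∧
  (∀ S : Finset X, ∃! i : ℕ, i < L.length ∧ S ∈ L.getD i ∅) ∧
  (∀ i j : ℕ, i < L.length → j < L.length →
    ∀ S ∈ L.getD i ∅, ∀ T ∈ L.getD j ∅, (r S T ↔ i ≤ j))

/-- The asymmetric (strict) part `P` of a relation. -/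
def StrictPart {A : Type*} (p : A → A → Prop) (a b : A) : Prop := p a b ∧ ¬ p b a

/-- The symmetric part `I` (indifference) of a relation. -/
def IndiffPart {A : Type*} (p : A → A → Prop) (a b : A) : Prop := p a b ∧ p b a

/-- The restrictions of `p` and `q` to `{x, y}` coincide. -/
def AgreeOn (p q : X → X → Prop) (x y : X) : Prop :=
  ∀ a ∈ ({x, y} : Set X), ∀ b ∈ ({x, y} : Set X), (p a b ↔ q a b)

/-- `|Δ[x]|` : the number of coalitions in `Δ` containing `x`. -/
def count (Δ : Finset (Finset X)) (x : X) : ℕ := (Δ.filter (fun S => x ∈ S)).card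

/-! ### Independence axioms and further axioms -/

/-- WIVIP: for a dichotomous `≿ : Σ₁ ≻ Σ₂`, any `x ∈ ⋂Σ₁` is socially strictly above
any `y ∉ ⋂Σ₁`. -/
def WIVIP (R : (Finset X → Finset X → Prop) → X → X → Prop) : Prop :=
  ∀ (r : Finset X → Finset X → Prop) (C₁ C₂ : Finset (Finset X)),
    IsClassList r [C₁, C₂] →
    ∀ x y : X, (∀ S ∈ C₁, x ∈ S) → (∃ S ∈ C₁, y ∉ S) →
    StrictPart (R r) x y

/-- IWS (independence from the worst set): if `≿ : Σ₁ ≻ ⋯ ≻ Σ_{l-1} ≻ Σ_l` (`l ≥ 2`)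
and `≿'` is obtained from `≿` by partitioning the worst class `Σ_l` into ordered
classes `Γ₁ ≻' ⋯ ≻' Γ_{l'}`, then `x P_≿ y` implies `x P_≿' y`. -/
def IWS (R : (Finset X → Finset X → Prop) → X → X → Prop) : Prop :=
  ∀ (r r' : Finset X → Finset X → Prop) (L Γ : List (Finset (Finset X)))
    (W : Finset (Finset X)),
    L ≠ [] → IsClassList r (L ++ [W]) → IsClassList r' (L ++ Γ) →
    ∀ x y : X, StrictPart (R r) x y → StrictPart (R r') x y

/-- IBS (independence from the best set): if `≿ : Σ₁ ≻ Σ₂ ≻ ⋯ ≻ Σ_l` (`l ≥ 2`)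
and `≿'` is obtained from `≿` by partitioning the best class `Σ₁` into ordered
classes `Γ₁ ≻' ⋯ ≻' Γ_{l'}`, then `x P_≿ y` implies `x P_≿' y`. -/
def IBS (R : (Finset X → Finset X → Prop) → X → X → Prop) : Prop :=
  ∀ (r r' : Finset X → Finset X → Prop) (B : Finset (Finset X))
    (L Γ : List (Finset (Finset X))),
    L ≠ [] → IsClassList r (B :: L) → IsClassList r' (Γ ++ L) →
    ∀ x y : X, StrictPart (R r) x y → StrictPart (R r') x y

/-- TO (tops-only): two weak orders with the same best equivalence class get the
same social ranking. -/
def TO (R : (Finset X → Finset X → Prop) → X → X → Prop) : Prop :=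
  ∀ (r r' : Finset X → Finset X → Prop) (B : Finset (Finset X))
    (L L' : List (Finset (Finset X))),
    IsClassList r (B :: L) → IsClassList r' (B :: L') → R r = R r'

/-- The class list obtained from `L` by sliding `Δ` out of class `k₁` into class `k₂`
(`Σ_{k₁}` is replaced by `Σ_{k₁} \ Δ` and `Σ_{k₂}` by `Σ_{k₂} ∪ Δ`; if `Δ = Σ_{k₁}`
the emptied class disappears). -/
def slide (L : List (Finset (Finset X))) (k₁ k₂ : ℕ) (Δ : Finset (Finset X)) :
    List (Finset (Finset X)) :=
  ((L.set k₁ ((L.getD k₁ ∅) \ Δ)).set k₂ ((L.getD k₂ ∅) ∪ Δ)).filter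
    (fun C => decide (C ≠ ∅))

/-- SI (slide independence): sliding a proper subfamily `Δ ⊊ Σ_{k₁}` with
`|Δ[x]| = |Δ[y]|` into another class does not change the social ranking on `{x, y}`. -/
def SI (R : (Finset X → Finset X → Prop) → X → X → Prop) : Prop :=
  ∀ (r r' : Finset X → Finset X → Prop) (L : List (Finset (Finset X)))
    (k₁ k₂ : ℕ) (x y : X) (Δ : Finset (Finset X)),
    IsClassList r L → k₁ < L.length → k₂ < L.length →
    Δ ⊂ L.getD k₁ ∅ → count Δ x = count Δ y →
    IsClassList r' (slide L k₁ k₂ Δ) →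
    AgreeOn (R r) (R r') x y

/-- SSI (strong slide independence): as SI, but `Δ ⊆ Σ_{k₁}` may be the whole class
(in which case the class disappears). -/
def SSI (R : (Finset X → Finset X → Prop) → X → X → Prop) : Prop :=
  ∀ (r r' : Finset X → Finset X → Prop) (L : List (Finset (Finset X)))
    (k₁ k₂ : ℕ) (x y : X) (Δ : Finset (Finset X)),
    IsClassList r L → k₁ < L.length → k₂ < L.length →
    Δ ⊆ L.getD k₁ ∅ → count Δ x = count Δ y →
    IsClassList r' (slide L k₁ k₂ Δ) →
    AgreeOn (R r) (R r') x y

/-- Top-SI: the condition of SI restricted to slides out of the best class (`k₁ = 1`,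
i.e. index `0`). -/
def TopSI (R : (Finset X → Finset X → Prop) → X → X → Prop) : Prop :=
  ∀ (r r' : Finset X → Finset X → Prop) (L : List (Finset (Finset X)))
    (k₂ : ℕ) (x y : X) (Δ : Finset (Finset X)),
    IsClassList r L → 0 < L.length → k₂ < L.length →
    Δ ⊂ L.getD 0 ∅ → count Δ x = count Δ y →
    IsClassList r' (slide L 0 k₂ Δ) →
    AgreeOn (R r) (R r') x y

/-- The class list of `≿' : Σ₁ ≻' ⋯ ≻' Σ_{k-1} ≻' Δ ≻' Σ_k \ Δ ≻' ⋯ ≻' Σ_l`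
(empty classes disappear). -/
def inuiList (L : List (Finset (Finset X))) (k : ℕ) (Δ : Finset (Finset X)) :
    List (Finset (Finset X)) :=
  (L.take k ++ [Δ, (L.getD k ∅) \ Δ] ++ L.drop (k + 1)).filter
    (fun C => decide (C ≠ ∅))

/-- INUI (independence of non-unanimous improvements). -/
def INUI (R : (Finset X → Finset X → Prop) → X → X → Prop) : Prop :=
  ∀ (r r' : Finset X → Finset X → Prop) (L : List (Finset (Finset X)))
    (k : ℕ) (Δ : Finset (Finset X)) (x y : X),
    IsClassList r L → k < L.length → Δ ⊆ L.getD k ∅ →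
    (∃ S ∈ Δ, x ∉ S) → (∃ S ∈ Δ, y ∉ S) →
    IsClassList r' (inuiList L k Δ) →
    AgreeOn (R r) (R r') x y

/-- The weak order `≿_π := {(π(S), π(T)) : S ≿ T}` induced by a permutation `π` of `X`. -/
def permRel (π : Equiv.Perm X) (r : Finset X → Finset X → Prop) :
    Finset X → Finset X → Prop :=
  fun A B => r (A.image π.symm) (B.image π.symm)

/-- NT (neutrality). -/
def NT (R : (Finset X → Finset X → Prop) → X → X → Prop) : Prop :=
  ∀ (π : Equiv.Perm X) (r : Finset X → Finset X → Prop), IsWeakOrder r →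
    ∀ x y : X, (R (permRel π r) (π x) (π y) ↔ R r x y)

/-- IIC (independence of irrelevant coalitions). -/
def IIC (R : (Finset X → Finset X → Prop) → X → X → Prop) : Prop :=
  ∀ (r r' : Finset X → Finset X → Prop), IsWeakOrder r → IsWeakOrder r' →
    ∀ x y : X,
      (∀ S : Finset X, x ∉ S → y ∉ S →
        (r (insert x S) (insert y S) ↔ r' (insert x S) (insert y S))) →
      (R r x y ↔ R r' x y)

/-! ### The social ranking solutions -/

/-- `θ_≿(x) = (|Σ₁[x]|, …, |Σ_l[x]|)`. -/
def theta (L : List (Finset (Finset X))) (x : X) : List ℕ := L.map (fun C => count C x)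

/-- The lexicographic order `a ≥^L b` on vectors of naturals. -/
def GeLex (a b : List ℕ) : Prop :=
  a = b ∨ ∃ k < a.length, (∀ j < k, a.getD j 0 = b.getD j 0) ∧ b.getD k 0 < a.getD k 0

/-- The dual lexicographic order `a ≥^DL b` (read from the last coordinate;
fewer appearances in worse classes is better). -/
def GeDualLex (a b : List ℕ) : Prop :=
  a = b ∨ ∃ k < a.length, (∀ j, k < j → a.getD j 0 = b.getD j 0) ∧ a.getD k 0 < b.getD k 0

/-- The lexicographic excellence solution `R^L` : `x R^L_≿ y ↔ θ_≿(x) ≥^L θ_≿(y)`. -/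
def RL (r : Finset X → Finset X → Prop) (x y : X) : Prop :=
  ∀ L, IsClassList r L → GeLex (theta L x) (theta L y)

/-- The dual lexicographic excellence solution `R^DL`. -/
def RDL (r : Finset X → Finset X → Prop) (x y : X) : Prop :=
  ∀ L, IsClassList r L → GeDualLex (theta L x) (theta L y)

/-- Plurality `R^P` : `x R^P_≿ y ↔ |Σ₁[x]| ≥ |Σ₁[y]|`. -/
def RP (r : Finset X → Finset X → Prop) (x y : X) : Prop :=
  ∀ L, IsClassList r L → count (L.getD 0 ∅) y ≤ count (L.getD 0 ∅) x

/-- `e_≿(x)` : the largest `k` such that `x` belongs to every coalition of each of the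
first `k` equivalence classes (`0` if `x ∉ T₁`). -/
def eIIS (L : List (Finset (Finset X))) (x : X) : ℕ :=
  (L.takeWhile (fun C => decide (∀ S ∈ C, x ∈ S))).length

/-- The intersection initial segment rule `R^IIS` : `x R^IIS_≿ y ↔ e_≿(x) ≥ e_≿(y)`. -/
def RIIS (r : Finset X → Finset X → Prop) (x y : X) : Prop :=
  ∀ L, IsClassList r L → eIIS L y ≤ eIIS L x

/-- The constant-`X` rule: everybody is ranked indifferent. -/
def RconstX : (Finset X → Finset X → Prop) → X → X → Prop := fun _ _ _ => True

/-- The split-plurality score `s^split_≿(z) = ∑_{S ∈ Σ₁ : z ∈ S} 1/|S|`. -/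
def splitScore (C : Finset (Finset X)) (z : X) : ℚ :=
  ∑ S ∈ C.filter (fun S => z ∈ S), (1 : ℚ) / (S.card : ℚ)

/-- Split-plurality `R^splitP`. -/
def RsplitP (r : Finset X → Finset X → Prop) (x y : X) : Prop :=
  ∀ L, IsClassList r L → splitScore (L.getD 0 ∅) y ≤ splitScore (L.getD 0 ∅) x

/-- Plurality with tie-breaking by a linear order `t = ▷` :
`x R^{P,▷}_≿ y ↔ (x P^P_≿ y ∨ (x I^P_≿ y ∧ x ▷ y))`. -/
def RPtie (t : X → X → Prop) (r : Finset X → Finset X → Prop) (x y : X) : Prop :=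
  ∀ L, IsClassList r L →
    (count (L.getD 0 ∅) y < count (L.getD 0 ∅) x ∨
      (count (L.getD 0 ∅) x = count (L.getD 0 ∅) y ∧ t x y))


theorem mem_top {r : Finset X → Finset X → Prop} {L : List (Finset (Finset X))}
    (h : IsClassList r L) (S : Finset X) : S ∈ L.getD 0 ∅ ↔ ∀ T, r S T := by
  obtain ⟨h1, h2, h3⟩ := h
  have hpos : 0 < L.length := by
    obtain ⟨i, ⟨hi, _⟩, _⟩ := h2 ∅
    omega
  constructor
  · intro hS T
    obtain ⟨j, ⟨hj, hT⟩, _⟩ := h2 T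
    exact (h3 0 j hpos hj S hS T hT).2 (Nat.zero_le _)
  · intro hS
    obtain ⟨i, ⟨hi, hSi⟩, _⟩ := h2 S
    have hne : (L.getD 0 ∅).Nonempty := by
      apply h1
      rw [List.getD_eq_getElem _ _ hpos]
      exact List.getElem_mem hpos
    obtain ⟨T, hT⟩ := hne
    have := (h3 i 0 hi hpos S hSi T hT).1 (hS T)
    obtain rfl : i = 0 := by omega
    exact hSi

theorem top_unique {r : Finset X → Finset X → Prop} {L L' : List (Finset (Finset X))}
    (h : IsClassList r L) (h' : IsClassList r L') : L.getD 0 ∅ = L'.getD 0 ∅ := by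
  ext S
  rw [mem_top h, mem_top h']

theorem RPtie_iff {t : X → X → Prop} {r : Finset X → Finset X → Prop}
    {L : List (Finset (Finset X))} (h : IsClassList r L) (x y : X) :
    RPtie t r x y ↔ (count (L.getD 0 ∅) y < count (L.getD 0 ∅) x ∨
      (count (L.getD 0 ∅) x = count (L.getD 0 ∅) y ∧ t x y)) := by
  constructor
  · intro H
    exact H L h
  · intro H L' h'
    rw [top_unique h' h]
    exact H

theorem count_sdiff {B D : Finset (Finset X)} (h : D ⊆ B) (x : X) :
    count (B \ D) x + count D x = count B x := by
  unfold count
  rw [← Finset.card_union_of_disjoint, ← Finset.filter_union, Finset.sdiff_union_of_subset h]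
  exact Finset.disjoint_filter_filter Finset.sdiff_disjoint

theorem count_union {B D : Finset (Finset X)} (h : Disjoint B D) (x : X) :
    count (B ∪ D) x = count B x + count D x := by
  unfold count
  rw [← Finset.card_union_of_disjoint, ← Finset.filter_union]
  exact Finset.disjoint_filter_filter h

theorem count_univ (x y : X) :
    count (Finset.univ : Finset (Finset X)) x = count Finset.univ y := by
  unfold count
  apply Finset.card_equiv (Equiv.swap x y).finsetCongr
  intro S
  simp [Finset.mem_map_equiv]

theorem univ_classList : IsClassList (fun _ _ : Finset X => True) [Finset.univ] := by
  refine ⟨by simp, fun S => ⟨0, by simp, ?_⟩, ?_⟩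
  · intro i hi
    have := hi.1
    simp at this
    omega
  · intro i j hi hj S _ T _
    simp at hi hj
    simp [hi, hj]

theorem slide_count {r : Finset X → Finset X → Prop} {L : List (Finset (Finset X))}
    {k₁ k₂ : ℕ} {x y : X} {Δ : Finset (Finset X)} (h : IsClassList r L)
    (hk1 : k₁ < L.length) (_hk2 : k₂ < L.length) (hD : Δ ⊂ L.getD k₁ ∅)
    (hc : count Δ x = count Δ y) :
    ∃ c d : ℕ, ∀ z, z = x ∨ z = y →
      count ((slide L k₁ k₂ Δ).getD 0 ∅) z + c = count (L.getD 0 ∅) z + d := by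
  obtain ⟨h1, h2, h3⟩ := h
  have hz : ∀ z, z = x ∨ z = y → count Δ z = count Δ x := by
    rintro z (rfl | rfl)
    · rfl
    · exact hc.symm
  have hne : ∀ i (hi : i < L.length), L.getD i ∅ ≠ ∅ := by
    intro i hi
    rw [List.getD_eq_getElem _ _ hi]
    exact (h1 _ (List.getElem_mem hi)).ne_empty
  have key : ∃ B', ∃ c d : ℕ, (slide L k₁ k₂ Δ).getD 0 ∅ = B' ∧ ∀ z, z = x ∨ z = y →
      count B' z + c = count (L.getD 0 ∅) z + d := by
    cases L with
    | nil => simp at hk1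
    | cons B L' =>
      have hB : B ≠ ∅ := by simpa using hne 0 (by simp)
      rcases k₁ with _ | a
      · rcases k₂ with _ | b
        · refine ⟨B, 0, 0, ?_, by simp⟩
          have hs : Δ ⊆ B := by simpa using hD.1
          simp [slide, Finset.union_eq_left.2 hs, hB]
        · have hD' : Δ ⊂ B := by simpa using hD
          have hne' : B \ Δ ≠ ∅ := by
            intro he
            exact hD'.2 (Finset.sdiff_eq_empty_iff_subset.1 he)
          refine ⟨B \ Δ, count Δ x, 0, ?_, ?_⟩
          · unfold slide
            simp only [List.getD_cons_zero, List.set_cons_zero, List.set_cons_succ]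
            rw [List.filter_cons_of_pos (by exact decide_eq_true hne')]
            simp
          · intro z hz'
            rw [← hz z hz', count_sdiff hD'.1]
            simp
      · rcases k₂ with _ | b
        · have hdis : Disjoint B Δ := by
            rw [Finset.disjoint_left]
            intro S hS hSD
            have := (h2 S).unique ⟨hk1, hD.1 hSD⟩ (y₂ := 0) ⟨by simp, by simpa using hS⟩
            omega
          have hne' : B ∪ Δ ≠ ∅ := by
            intro he
            exact hB (Finset.union_eq_empty.1 he).1
          refine ⟨B ∪ Δ, 0, count Δ x, ?_, ?_⟩
          · unfold slide
            simp only [List.getD_cons_zero, List.set_cons_zero, List.set_cons_succ]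
            rw [List.filter_cons_of_pos (by exact decide_eq_true hne')]
            simp
          · intro z hz'
            rw [← hz z hz', count_union hdis]
            simp
        · refine ⟨B, 0, 0, ?_, by simp⟩
          unfold slide
          simp only [List.set_cons_succ]
          rw [List.filter_cons_of_pos (by simpa using hB)]
          simp
  obtain ⟨B', c, d, hB', H⟩ := key
  exact ⟨c, d, by rw [hB']; exact H⟩

/-- For any reflexive linear order `▷` on `X`, plurality with tie-breaking by `▷`
satisfies WIVIP, TO, IWS and SI; moreover if `|X| ≥ 2` it does not satisfy NT. -/
theorem pluralityTie_props [Nonempty X] (t : X → X → Prop)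
    (hrefl : Reflexive t) (htotal : ∀ a b : X, t a b ∨ t b a)
    (htrans : Transitive t) (hanti : ∀ a b : X, t a b → t b a → a = b) :
    (WIVIP (RPtie t) ∧ TO (RPtie t) ∧ IWS (RPtie t) ∧ SI (RPtie t)) ∧
      (2 ≤ Fintype.card X → ¬ NT (RPtie t)) := by
  refine ⟨⟨?_, ?_, ?_, ?_⟩, ?_⟩
  · intro r C₁ C₂ h x y hx hy
    obtain ⟨S, hS, hyS⟩ := hy
    have hlt : count C₁ y < count C₁ x := by
      unfold count
      apply Finset.card_lt_card
      rw [Finset.filter_true_of_mem hx]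
      exact Finset.filter_ssubset.2 ⟨S, hS, hyS⟩
    constructor
    · rw [RPtie_iff h]
      left
      simpa using hlt
    · rw [RPtie_iff h]
      simp only [List.getD_cons_zero]
      omega
  · intro r r' B L L' h h'
    funext x y
    apply propext
    rw [RPtie_iff h, RPtie_iff h']
    simp
  · intro r r' L Γ W hL h h' x y
    cases L with
    | nil => exact absurd rfl hL
    | cons B L =>
      unfold StrictPart
      rw [RPtie_iff h, RPtie_iff h', RPtie_iff h, RPtie_iff h']
      simp
  · intro r r' L k₁ k₂ x y Δ h hk1 hk2 hD hc h' a ha b hb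
    obtain ⟨c, d, H⟩ := slide_count h hk1 hk2 hD hc
    have e1 := H a (by simpa using ha)
    have e2 := H b (by simpa using hb)
    rw [RPtie_iff h, RPtie_iff h']
    refine or_congr ?_ (and_congr_left fun _ => ?_) <;> omega
  · intro hcard hNT
    obtain ⟨x, y, hxy⟩ := Fintype.one_lt_card_iff.1 hcard
    have key : ∀ a b : X, RPtie t (fun _ _ => True) a b ↔ t a b := by
      intro a b
      rw [RPtie_iff univ_classList]
      simp [count_univ a b]
    have := hNT (Equiv.swap x y) (fun _ _ => True)
      ⟨fun _ => trivial, fun _ _ => Or.inl trivial, fun _ _ _ _ _ => trivial⟩ x y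
    have hp : permRel (Equiv.swap x y) (fun _ _ => True) = fun _ _ => True := rfl
    rw [hp, key, key, Equiv.swap_apply_left, Equiv.swap_apply_right] at this
    rcases htotal x y with h | h
    · exact hxy (hanti _ _ h (this.2 h))
    · exact hxy (hanti _ _ (this.1 h) h)

end SocialRanking
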